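/- arXiv:1406.0969 — 2 statements merged into one kernel-verified Lean document; each statement's English description precedes it below -/
import Mathlib

section
/- For every real x with |x| > 1: 2·∫_{−1}^1 log|x−t|·ψ(t) dt − π|x| < −2 − 2·log 2 (the strict Euler–Lagrange inequality off the support for the equilibrium measure ψ(t)dt in the external field π|t|). -/
open MeasureTheory Real

/-- The equilibrium density `ψ(x) = (1/π) log((1+√(1-x²))/|x|)`. -/
noncomputable def psiDens (x : ℝ) : ℝ :=
  (1 / π) * Real.log ((1 + Real.sqrt (1 - x ^ 2)) / |x|)

theorem aux_swap (f : ℝ → ℝ) (hf : Continuous f) :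
    ∫ t in (0:ℝ)..1, f t * (Real.log (1 + √(1 - t^2)) - Real.log t) =
      ∫ u in (0:ℝ)..(π/2), ∫ s in (0:ℝ)..1, f (sin u * s) := by
  set h : ℝ → ℝ := fun t => f t * (Real.log (1 + √(1 - t^2)) - Real.log t) with hh
  set K : ℝ → ℝ := fun u => ∫ s in (0:ℝ)..1, f (sin u * s) with hK
  set G : ℝ → ℝ := fun v => ∫ t in (0:ℝ)..v, f t with hG
  have hpos : ∀ t : ℝ, 1 + √(1 - t^2) ≠ 0 := fun t => by positivity
  have hInt : ∀ a b, IntervalIntegrable h volume a b := by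
    intro a b
    apply IntervalIntegrable.continuousOn_mul _ hf.continuousOn
    apply IntervalIntegrable.sub _ intervalIntegral.intervalIntegrable_log'
    apply Continuous.intervalIntegrable
    exact Continuous.log (by fun_prop) hpos
  have hKc : Continuous K := by
    apply intervalIntegral.continuous_parametric_intervalIntegral_of_continuous'
    fun_prop
  have hGK : ∀ u, G (sin u) = sin u * K u := by
    intro u
    simp [hG, hK]
  have hPsi : ∀ θ, G (sin θ) * (Real.log (1 + cos θ) - Real.log (sin θ)) =
      K θ * (sin θ * Real.log (1 + cos θ) - sin θ * Real.log (sin θ)) := by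
    intro θ; rw [hGK]; ring
  set Q : ℝ → ℝ := fun θ => (∫ t in (0:ℝ)..(sin θ), h t) - (∫ u in (0:ℝ)..θ, K u)
    - G (sin θ) * (Real.log (1 + cos θ) - Real.log (sin θ)) with hQ
  have hpi : (0:ℝ) < π/2 := by positivity
  have hQc : ContinuousOn Q (Set.Icc 0 (π/2)) := by
    simp only [hQ, hPsi]
    apply ContinuousOn.sub
    · apply Continuous.continuousOn
      apply Continuous.sub
      · exact (intervalIntegral.continuous_primitive hInt 0).comp continuous_sin
      · exact intervalIntegral.continuous_primitive (fun a b => hKc.intervalIntegrable a b) 0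
    · apply hKc.continuousOn.mul
      apply ContinuousOn.sub
      · apply continuous_sin.continuousOn.mul
        apply ContinuousOn.log (by fun_prop)
        intro θ hθ
        have := cos_nonneg_of_mem_Icc (x := θ) ⟨by linarith [hθ.1], hθ.2⟩
        positivity
      · exact (Real.continuous_mul_log.comp continuous_sin).continuousOn
  have hQd : ∀ θ ∈ Set.Ioo 0 (π/2), HasDerivAt Q 0 θ := by
    intro θ hθ
    have hc : 0 < cos θ := cos_pos_of_mem_Ioo ⟨by linarith [hθ.1], hθ.2⟩
    have hs : 0 < sin θ := sin_pos_of_pos_of_lt_pi hθ.1 (by linarith [hθ.2])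
    have hsq : √(1 - sin θ ^ 2) = cos θ := by
      rw [← cos_sq']; exact sqrt_sq hc.le
    have hm : Measurable h := by
      apply hf.measurable.mul
      fun_prop
    have d1 : HasDerivAt (fun v => ∫ t in (0:ℝ)..v, h t) (h (sin θ)) (sin θ) := by
      apply intervalIntegral.integral_hasDerivAt_right (hInt _ _)
        hm.stronglyMeasurable.stronglyMeasurableAtFilter
      apply hf.continuousAt.mul
      apply ContinuousAt.sub
      · exact (Continuous.log (by fun_prop) hpos).continuousAt
      · exact continuousAt_log hs.ne'
    have d1' := d1.comp θ (hasDerivAt_sin θ)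
    have d2 : HasDerivAt (fun v => ∫ t in (0:ℝ)..v, K t) (K θ) θ :=
      intervalIntegral.integral_hasDerivAt_right (hKc.intervalIntegrable _ _)
        hKc.stronglyMeasurable.stronglyMeasurableAtFilter hKc.continuousAt
    have d3 : HasDerivAt G (f (sin θ)) (sin θ) :=
      intervalIntegral.integral_hasDerivAt_right (hf.intervalIntegrable _ _)
        hf.stronglyMeasurable.stronglyMeasurableAtFilter hf.continuousAt
    have d3' := d3.comp θ (hasDerivAt_sin θ)
    have d4 := (((hasDerivAt_cos θ).const_add 1).log (by positivity)).sub
      ((hasDerivAt_sin θ).log hs.ne')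
    have := (d1'.sub d2).sub (d3'.mul d4)
    refine this.congr_deriv ?_
    simp only [Function.comp, hGK, hh, hsq, Pi.sub_apply]
    have h1 : 1 + cos θ ≠ 0 := by positivity
    have e : sin θ * (-sin θ / (1 + cos θ) - cos θ / sin θ) = -1 := by
      field_simp
      linarith [sin_sq_add_cos_sq θ]
    linear_combination (-K θ) * e
  obtain ⟨c, hc, he⟩ := exists_hasDerivAt_eq_slope Q (fun _ => 0) hpi hQc hQd
  have : Q (π/2) = Q 0 := by
    have h2 : π/2 - 0 ≠ 0 := by positivity
    field_simp at he
    linarith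
  simp [hQ, hG] at this
  linarith

theorem aux_circle (b : ℝ) (h0 : 0 ≤ b) (h1 : b < 1) :
    ∫ u in (0:ℝ)..(π/2), Real.log (1 + b^2 + 2 * b * cos (2 * u)) = 0 := by
  have hp : ∀ u, 0 < 1 + b^2 + 2 * b * cos u := by
    intro u
    nlinarith [neg_one_le_cos u, mul_nonneg h0 (by linarith [neg_one_le_cos u] : 0 ≤ 1 + cos u), sq_pos_of_pos (sub_pos.2 h1)]
  set g : ℝ → ℝ := fun u => Real.log (1 + b^2 + 2 * b * cos u) with hg
  have hgc : Continuous g := Continuous.log (by fun_prop) (fun u => (hp u).ne')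
  have e1 : ∫ u in (0:ℝ)..(π/2), Real.log (1 + b^2 + 2 * b * cos (2 * u)) = 2⁻¹ * ∫ u in (0:ℝ)..π, g u := by
    have := intervalIntegral.integral_comp_mul_left (a := 0) (b := π/2) g (c := 2) two_ne_zero
    simp only [hg, smul_eq_mul] at this
    rw [this]; congr 2 <;> ring
  have e2 : ∫ u in (π)..(2*π), g u = ∫ u in (0:ℝ)..π, g u := by
    have := intervalIntegral.integral_comp_sub_left (a := 0) (b := π) g (2*π)
    rw [show 2 * π - π = π by ring, sub_zero] at this
    rw [← this]
    simp [hg, cos_two_pi_sub]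
  have e3 : ∫ u in (0:ℝ)..(2*π), g u = 0 := by
    have hb : ‖(-b:ℂ)‖ < 1 := by simpa [abs_of_nonneg h0] using h1
    have := circleAverage_log_norm_sub_const₀ hb
    rw [circleAverage_def] at this
    have hne : (2*π)⁻¹ ≠ 0 := by positivity
    have h3 := (smul_eq_zero.1 this).resolve_left hne
    have h4 : ∀ θ, g θ = 2 * Real.log ‖circleMap 0 1 θ - (-b:ℂ)‖ := by
      intro θ
      have : ‖circleMap 0 1 θ - (-b:ℂ)‖ ^ 2 = 1 + b^2 + 2 * b * cos θ := by
        rw [← Complex.normSq_eq_norm_sq, Complex.normSq_apply]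
        simp [circleMap, Complex.exp_ofReal_mul_I_re, Complex.exp_ofReal_mul_I_im]
        linarith [sin_sq_add_cos_sq θ]
      simp only [hg]
      rw [← this, Real.log_pow]; norm_num
    simp_rw [h4]
    rw [intervalIntegral.integral_const_mul, h3, mul_zero]
  have e4 := intervalIntegral.integral_add_adjacent_intervals (μ := volume) (hgc.intervalIntegrable 0 π) (hgc.intervalIntegrable π (2*π))
  rw [e1]; linarith

theorem aux_inner (x s : ℝ) (hx : 1 < x) (h0 : 0 ≤ s) (h1 : s ≤ 1) :
    ∫ u in (0:ℝ)..(π/2), Real.log (x^2 - (sin u * s)^2) = π * Real.log ((x + √(x^2 - s^2))/2) := by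
  have hr0 := sqrt_nonneg (x^2 - s^2)
  have hr : √(x^2 - s^2)^2 = x^2 - s^2 := sq_sqrt (by nlinarith)
  set r := √(x^2 - s^2)
  have hc : 0 < x + r := by linarith
  set b := (s/(x+r))^2 with hb
  have hb1 : b < 1 := by
    rw [hb, sq_lt_one_iff₀ (by positivity), div_lt_one hc]; linarith
  have key : ∀ u, Real.log (x^2 - (sin u * s)^2) = 2 * Real.log ((x+r)/2) + Real.log (1 + b^2 + 2*b*cos (2*u)) := by
    intro u
    have hp : 0 < 1 + b^2 + 2 * b * cos (2*u) := by
      nlinarith [neg_one_le_cos (2*u), mul_nonneg (sq_nonneg (s/(x+r))) (by linarith [neg_one_le_cos (2*u)] : 0 ≤ 1 + cos (2*u)), sq_pos_of_pos (sub_pos.2 hb1)]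
    have : x^2 - (sin u * s)^2 = ((x+r)/2)^2 * (1 + b^2 + 2*b*cos (2*u)) := by
      have hbc : b * ((x+r)/2) = (x - r)/2 := by
        rw [hb]; field_simp; linarith
      have : cos (2*u) = 1 - 2 * sin u ^2 := by rw [cos_two_mul, cos_sq']; ring
      rw [this]
      have e : ((x+r)/2)^2 * (1 + b^2 + 2*b*(1 - 2 * sin u ^2)) = ((x+r)/2)^2 + (b * ((x+r)/2))^2 + 2 * ((x+r)/2) * (b * ((x+r)/2))*(1 - 2 * sin u ^2) := by ring
      rw [e, hbc]
      linear_combination (- sin u^2) * hr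
    rw [this, Real.log_mul (by positivity) hp.ne', Real.log_pow]; norm_num
  simp_rw [key]
  have hp : ∀ u, 0 < 1 + b^2 + 2 * b * cos (2*u) := by
    intro u
    nlinarith [neg_one_le_cos (2*u), mul_nonneg (sq_nonneg (s/(x+r))) (by linarith [neg_one_le_cos (2*u)] : 0 ≤ 1 + cos (2*u)), sq_pos_of_pos (sub_pos.2 hb1)]
  rw [intervalIntegral.integral_add (by simp)
    ((Continuous.log (by fun_prop) (fun u => (hp u).ne')).intervalIntegrable _ _), aux_circle b (by positivity) hb1]
  simp; ring

theorem aux_final_int (x : ℝ) (hx : 1 < x) :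
    ∫ s in (0:ℝ)..1, Real.log ((x + √(x^2 - s^2))/2) =
     Real.log ((x + √(x^2 - 1))/2) + x * arcsin (1/x) - 1 := by
  have hd : ∀ s ∈ Set.uIcc (0:ℝ) 1, HasDerivAt (fun s => s * Real.log ((x + √(x^2 - s^2))/2) + x * arcsin (s/x) - s)
      (Real.log ((x + √(x^2 - s^2))/2)) s := by
    intro s hs
    rw [Set.uIcc_of_le zero_le_one] at hs
    have hq : 0 < x^2 - s^2 := by nlinarith [hs.1, hs.2]
    have hr0 := sqrt_pos.2 hq
    have hr : √(x^2 - s^2)^2 = x^2 - s^2 := sq_sqrt hq.le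
    have d1 : HasDerivAt (fun s => x^2 - s^2) (-(2*s)) s := by
      simpa using ((hasDerivAt_pow 2 s).const_sub (x^2))
    have d2 := (((d1.sqrt hq.ne').const_add x).div_const 2).log (by positivity)
    have hsx : s / x < 1 := by rw [div_lt_one (by linarith)]; linarith [hs.2]
    have hsx0 : 0 ≤ s / x := div_nonneg hs.1 (by linarith)
    have d3 := (hasDerivAt_arcsin (x := s/x) (by linarith) hsx.ne).comp s ((hasDerivAt_id s).div_const x)
    have hsr : √(1 - (s/x)^2) = √(x^2 - s^2) / x := by
      rw [show 1 - (s/x)^2 = (x^2 - s^2)/x^2 by field_simp, sqrt_div hq.le, sqrt_sq (by linarith)]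
    have := (((hasDerivAt_id s).mul d2).add (d3.const_mul x)).sub (hasDerivAt_id s)
    refine this.congr_deriv ?_
    simp only [hsr, id]
    set r := √(x^2 - s^2)
    have hxr : x + r ≠ 0 := by positivity
    have hx0 : x ≠ 0 := by positivity
    field_simp
    ring_nf
    nlinarith
  rw [intervalIntegral.integral_eq_sub_of_hasDerivAt hd]
  · simp
  · apply ContinuousOn.intervalIntegrable
    apply ContinuousOn.log (by fun_prop)
    intro s hs
    have : 0 ≤ √(x^2 - s^2) := sqrt_nonneg _
    positivity

theorem aux_ineq (x : ℝ) (hx : 1 < x) :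
    Real.log (x + √(x^2 - 1)) + x * arcsin (1/x) < π/2 * x := by
  have hm : StrictMonoOn (fun x : ℝ => π/2 * x - (Real.log (x + √(x^2 - 1)) + x * arcsin (1/x))) (Set.Ici 1) := by
    apply strictMonoOn_of_deriv_pos (convex_Ici 1)
    · have h0 : ∀ y ∈ Set.Ici (1:ℝ), y ≠ 0 := fun y hy => by
        have : (1:ℝ) ≤ y := hy
        positivity
      apply ContinuousOn.sub (by fun_prop)
      apply ContinuousOn.add
      · apply ContinuousOn.log (by fun_prop)
        intro y hy
        have : (1:ℝ) ≤ y := hy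
        positivity
      · apply continuousOn_id.mul
        apply continuous_arcsin.comp_continuousOn
        exact continuousOn_const.div continuousOn_id h0
    · intro y hy
      rw [interior_Ici] at hy
      have hy : (1:ℝ) < y := hy
      have hq : 0 < y^2 - 1 := by nlinarith
      have hr0 := sqrt_pos.2 hq
      have hr : √(y^2 - 1)^2 = y^2 - 1 := sq_sqrt hq.le
      have hy0 : y ≠ 0 := by positivity
      have d1 : HasDerivAt (fun s : ℝ => s^2 - 1) (2*y) y := by
        simpa using ((hasDerivAt_pow 2 y).sub_const 1)
      have d2 := ((hasDerivAt_id y).add (d1.sqrt hq.ne')).log (by simp only [Pi.add_apply, id]; positivity)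
      have hsx : 1 / y < 1 := by rw [div_lt_one (by linarith)]; linarith
      have hsx0 : 0 < 1 / y := by positivity
      have d3 := (hasDerivAt_arcsin (x := 1/y) (by linarith) hsx.ne).comp y ((hasDerivAt_const y (1:ℝ)).div (hasDerivAt_id y) hy0)
      have hsr : √(1 - (1/y)^2) = √(y^2 - 1) / y := by
        rw [show 1 - (1/y)^2 = (y^2 - 1)/y^2 by field_simp, sqrt_div hq.le, sqrt_sq (by linarith)]
      have := ((hasDerivAt_id y).const_mul (π/2)).sub (d2.add ((hasDerivAt_id y).mul d3))
      have h2 : HasDerivAt (fun x : ℝ => π/2 * x - (Real.log (x + √(x^2 - 1)) + x * arcsin (1/x))) (π/2 - arcsin (1/y)) y := by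
        refine this.congr_deriv ?_
        simp only [hsr, id, Pi.add_apply, Function.comp]
        set r := √(y^2 - 1)
        have hxr : y + r ≠ 0 := by positivity
        field_simp
        ring
      rw [h2.deriv]
      have := arcsin_lt_pi_div_two.2 hsx
      linarith
  have := hm (Set.mem_Ici.2 le_rfl) (Set.mem_Ici.2 hx.le) hx
  simp at this
  simp
  linarith

theorem psiDens_neg (t : ℝ) : psiDens (-t) = psiDens t := by simp [psiDens]

theorem psiDens_of_pos (t : ℝ) (ht : 0 < t) :
    psiDens t = (1 / π) * (Real.log (1 + √(1 - t^2)) - Real.log t) := by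
  rw [psiDens, abs_of_pos ht, Real.log_div (by positivity) ht.ne']

theorem psiDens_int : IntervalIntegrable psiDens volume 0 1 := by
  have : IntervalIntegrable (fun t : ℝ => (1 / π) * (Real.log (1 + √(1 - t^2)) - Real.log t)) volume 0 1 := by
    apply IntervalIntegrable.const_mul
    apply IntervalIntegrable.sub _ intervalIntegral.intervalIntegrable_log'
    apply Continuous.intervalIntegrable
    exact Continuous.log (by fun_prop) (fun t => by positivity)
  refine this.congr ?_
  intro t ht
  rw [Set.uIoc_of_le zero_le_one] at ht
  exact (psiDens_of_pos t ht.1).symm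

theorem aux_main (x : ℝ) (hx : 1 < x) :
    2 * (∫ t in (-1 : ℝ)..1, Real.log |x - t| * psiDens t) - π * x <
      -2 - 2 * Real.log 2 := by
  have i1 : IntervalIntegrable (fun t => Real.log |x - t| * psiDens t) volume 0 1 := by
    apply psiDens_int.continuousOn_mul
    apply ContinuousOn.log (by fun_prop)
    intro t ht
    rw [Set.uIcc_of_le zero_le_one] at ht
    exact abs_ne_zero.2 (by linarith [ht.2])
  have i2 : IntervalIntegrable (fun t => Real.log |x + t| * psiDens t) volume 0 1 := by
    apply psiDens_int.continuousOn_mul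
    apply ContinuousOn.log (by fun_prop)
    intro t ht
    rw [Set.uIcc_of_le zero_le_one] at ht
    exact abs_ne_zero.2 (by linarith [ht.1])
  have i3 : IntervalIntegrable (fun t => Real.log |x - t| * psiDens t) volume (-1) 0 := by
    have := (IntervalIntegrable.iff_comp_neg).1 i2
    simp only [psiDens_neg, ← sub_eq_add_neg, neg_zero] at this
    exact this.symm
  have e1 : ∫ t in (-1 : ℝ)..0, Real.log |x - t| * psiDens t = ∫ t in (0:ℝ)..1, Real.log |x + t| * psiDens t := by
    have := intervalIntegral.integral_comp_neg (a := 0) (b := 1) (fun t => Real.log |x - t| * psiDens t)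
    simp only [psiDens_neg, sub_neg_eq_add, neg_zero] at this
    exact this.symm
  set f : ℝ → ℝ := fun t => Real.log (max (x^2 - t^2) (x^2 - 1)) with hf
  have hx1 : 0 < x^2 - 1 := by nlinarith
  have hfc : Continuous f :=
    Continuous.log (by fun_prop) (fun t => (lt_of_lt_of_le hx1 (le_max_right _ _)).ne')
  have hfe : ∀ t : ℝ, t^2 ≤ 1 → f t = Real.log (x^2 - t^2) := by
    intro t ht
    simp only [hf]; rw [max_eq_left (by linarith)]
  have e2 : ∫ t in (-1 : ℝ)..1, Real.log |x - t| * psiDens t =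
      (1/π) * ∫ t in (0:ℝ)..1, f t * (Real.log (1 + √(1 - t^2)) - Real.log t) := by
    rw [← intervalIntegral.integral_add_adjacent_intervals i3 i1, e1,
      ← intervalIntegral.integral_add i2 i1, ← intervalIntegral.integral_const_mul]
    apply intervalIntegral.integral_congr_uIoo
    intro t ht
    rw [Set.uIoo_of_le zero_le_one] at ht
    obtain ⟨h0, h1⟩ := ht
    simp only
    rw [psiDens_of_pos t h0, hfe t (by nlinarith), abs_of_pos (by linarith), abs_of_pos (by linarith),
      show x^2 - t^2 = (x+t)*(x-t) by ring, Real.log_mul (by linarith) (by linarith)]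
    ring
  have e3 : ∫ u in (0:ℝ)..(π/2), ∫ s in (0:ℝ)..1, f (sin u * s) =
      π * ∫ s in (0:ℝ)..1, Real.log ((x + √(x^2 - s^2))/2) := by
    rw [intervalIntegral_intervalIntegral_swap, ← intervalIntegral.integral_const_mul]
    · apply intervalIntegral.integral_congr
      intro s hs
      rw [Set.uIcc_of_le zero_le_one] at hs
      simp only
      rw [← aux_inner x s hx hs.1 hs.2]
      apply intervalIntegral.integral_congr
      intro u _
      apply hfe
      have a1 := sin_sq_le_one u
      have a2 : s^2 ≤ 1 := by nlinarith [hs.1, hs.2]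
      rw [mul_pow]
      exact mul_le_one₀ a1 (sq_nonneg s) a2
    · have hc : Continuous (Function.uncurry fun u s => f (sin u * s)) := by
        simp only [Function.uncurry_def]; fun_prop
      exact (hc.continuousOn.integrableOn_compact (isCompact_uIcc.prod isCompact_uIcc)).mono_set
        (Set.prod_mono Set.uIoc_subset_uIcc Set.uIoc_subset_uIcc)
  rw [e2, aux_swap f hfc, e3, aux_final_int x hx]
  have h4 := aux_ineq x hx
  rw [Real.log_div (by positivity) two_ne_zero]
  have : π ≠ 0 := pi_ne_zero
  field_simp
  field_simp at h4
  linarith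

/-- **Strict Euler–Lagrange inequality off the support.**
For every real `x` with `|x| > 1`:
`2 ∫_{-1}^1 log|x-t| ψ(t) dt - π|x| < -2 - 2 log 2`. -/
theorem euler_lagrange_off_support (x : ℝ) (hx : 1 < |x|) :
    2 * (∫ t in (-1 : ℝ)..1, Real.log |x - t| * psiDens t) - π * |x| <
      -2 - 2 * Real.log 2 := by
  rcases le_or_gt 0 x with h | h
  · rw [abs_of_nonneg h] at hx
    rw [abs_of_nonneg h]
    exact aux_main x hx
  · rw [abs_of_neg h] at hx
    rw [abs_of_neg h]
    have h1 := aux_main (-x) hx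
    have := intervalIntegral.integral_comp_neg (a := -1) (b := 1) (fun t => Real.log |x - t| * psiDens t)
    simp only [psiDens_neg, neg_neg] at this
    rw [← this]
    have e : ∀ t, |x - -t| = |-x - t| := fun t => by rw [← abs_neg]; congr 1; ring
    simp only [e]
    exact h1
end

section
/- For every z ∈ ℂ with Re z > 0 and Im z ≠ 0: ∫_{−1}^1 ψ(x)/(z−x) dx = π/2 − sgn(Im z)·i·Log((1+(1−z²)^{1/2})/z), with principal branches of Log and the square root; equivalently the derivative of g satisfies g'(z) = π/2 − iπψ(z) for Im z > 0 and g'(z) = π/2 + iπψ(z) for Im z < 0 (Re z > 0). -/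
open MeasureTheory Filter Real

/-- The `g`-function `g(z) = ∫_{-1}^1 Log(z-x) ψ(x) dx` (principal logarithm). -/
noncomputable def gFun (z : ℂ) : ℂ :=
  ∫ x in (-1 : ℝ)..1, Complex.log (z - x) * (psiDens x : ℂ)

/-- The analytic continuation `ψ(z) = (1/π) Log((1+(1-z²)^{1/2})/z)` of the equilibrium
density, with principal branches. -/
noncomputable def psiC (z : ℂ) : ℂ :=
  (1 / (π : ℂ)) * Complex.log ((1 + (1 - z ^ 2) ^ ((1 : ℂ) / 2)) / z)


lemma psi_abs_le (x : ℝ) (hx : x ∈ Set.Icc (-1:ℝ) 1) :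
    |psiDens x| ≤ (1/π) * (Real.log 2 - Real.log x) := by
  unfold psiDens
  rw [abs_mul, abs_of_pos (by positivity : (0:ℝ) < 1/π)]
  apply mul_le_mul_of_nonneg_left _ (by positivity)
  rcases eq_or_ne x 0 with rfl | h0
  · simp; exact Real.log_nonneg (by norm_num)
  have hx0 : 0 < |x| := abs_pos.mpr h0
  have hx1 : |x| ≤ 1 := abs_le.mpr hx
  have hs0 := Real.sqrt_nonneg (1 - x^2)
  have hs1 : Real.sqrt (1 - x^2) ≤ 1 := by
    rw [Real.sqrt_le_left (by norm_num)]; nlinarith [sq_nonneg x]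
  rw [Real.log_div (by positivity) hx0.ne', Real.log_abs]
  have h1 : Real.log x ≤ 0 := by rw [← Real.log_abs]; exact Real.log_nonpos hx0.le hx1
  have h2 : 0 ≤ Real.log (1 + Real.sqrt (1 - x^2)) := Real.log_nonneg (by linarith)
  have h3 : Real.log (1 + Real.sqrt (1 - x^2)) ≤ Real.log 2 :=
    Real.log_le_log (by linarith) (by linarith)
  rw [abs_of_nonneg (by linarith)]
  linarith

lemma psi_meas : Measurable psiDens := by
  unfold psiDens; fun_prop

lemma psi_int : IntervalIntegrable psiDens volume (-1) 1 := by
  have h : IntervalIntegrable (fun x : ℝ => (1/π) * (Real.log 2 - Real.log x)) volume (-1) 1 :=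
    (intervalIntegrable_const.sub intervalIntegral.intervalIntegrable_log').const_mul _
  refine h.mono_fun psi_meas.aestronglyMeasurable ?_
  rw [Set.uIoc_of_le (by norm_num)]
  filter_upwards [ae_restrict_mem measurableSet_Ioc] with x hx
  rw [Real.norm_eq_abs, Real.norm_eq_abs]
  exact (psi_abs_le x ⟨hx.1.le, hx.2⟩).trans (le_abs_self _)

lemma psi_int' : IntervalIntegrable (fun x => (psiDens x : ℂ)) volume (-1) 1 := by
  have := psi_int
  rw [intervalIntegrable_iff] at this ⊢
  exact this.ofReal

lemma psi_even (x : ℝ) : psiDens (-x) = psiDens x := by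
  simp [psiDens]

lemma psi_deriv (x : ℝ) (hx : x ∈ Set.Ioo (0:ℝ) 1) :
    HasDerivAt psiDens (-(1/π) * (1 / (x * Real.sqrt (1 - x^2)))) x := by
  obtain ⟨h0, h1⟩ := hx
  have hp : 0 < 1 - x^2 := by nlinarith
  have hs : 0 < Real.sqrt (1 - x^2) := Real.sqrt_pos.mpr hp
  have hsq : Real.sqrt (1 - x^2) ^ 2 = 1 - x^2 := Real.sq_sqrt hp.le
  have e : psiDens =ᶠ[nhds x]
      fun y => (1/π) * (Real.log (1 + Real.sqrt (1 - y^2)) - Real.log y) := by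
    filter_upwards [lt_mem_nhds h0] with y hy
    unfold psiDens
    rw [Real.log_div (by positivity) (by positivity), Real.log_abs]
  refine HasDerivAt.congr_of_eventuallyEq ?_ e
  have d1 : HasDerivAt (fun y : ℝ => 1 - y^2) (-(2*x)) x := by
    simpa using (hasDerivAt_pow 2 x).const_sub 1
  have d2 := ((d1.sqrt hp.ne').const_add 1).log (by positivity)
  have d3 := (d2.sub (Real.hasDerivAt_log h0.ne')).const_mul (1/π)
  refine d3.congr_deriv ?_
  generalize Real.sqrt (1 - x^2) = r at *
  have : 1 + r ≠ 0 := by positivity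
  field_simp
  linear_combination (-1 : ℝ) * hsq

lemma x_psi_cont : ContinuousOn (fun x : ℝ => x * psiDens x) (Set.Icc 0 1) := by
  have : Continuous (fun x : ℝ => (1/π) * (x * Real.log (1 + Real.sqrt (1 - x^2)) - x * Real.log x)) := by
    refine continuous_const.mul (Continuous.sub ?_ Real.continuous_mul_log)
    refine continuous_id.mul (Continuous.log (by fun_prop) ?_)
    intro x; positivity
  refine this.continuousOn.congr ?_
  intro x hx
  rcases eq_or_ne x 0 with rfl | h0
  · simp
  have : 0 < |x| := abs_pos.mpr h0
  simp only [psiDens]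
  rw [Real.log_div (by positivity) (by positivity), Real.log_abs]
  ring

lemma sq_slit (w : ℂ) (hr : w.re ≠ 0) (hi : w.im ≠ 0) (t : ℝ) :
    1 - w^2 * (t:ℂ)^2 ∈ Complex.slitPlane := by
  rcases eq_or_ne t 0 with rfl | h0
  · simp
  right
  have : (1 - w^2 * (t:ℂ)^2).im = -(2 * w.re * w.im * t^2) := by
    rw [← Complex.ofReal_pow]
    simp only [pow_two, Complex.sub_im, Complex.mul_im, Complex.mul_re, Complex.one_im, Complex.ofReal_re, Complex.ofReal_im]; ring
  rw [this]
  simp [hr, hi, h0]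

lemma sqrtR_int : IntervalIntegrable (fun x : ℝ => 1 / Real.sqrt (1 - x^2)) volume 0 1 := by
  refine intervalIntegral.intervalIntegrable_deriv_of_nonneg (g := Real.arcsin)
    Real.continuous_arcsin.continuousOn ?_ ?_
  · intro x hx
    simp at hx
    exact Real.hasDerivAt_arcsin (by linarith) (by linarith)
  · intro x hx; positivity

lemma inner_int (c : ℂ) (hc : 0 < c.re) (a : ℂ) (hca : c^2 = 1 - a)
    (ha : ∀ x : ℝ, 1 - a * (x:ℂ)^2 ≠ 0) :
    ∫ x in (0:ℝ)..1, ((1 / Real.sqrt (1 - x^2) : ℝ) : ℂ) * (1 / (1 - a * (x:ℂ)^2)) = π / (2 * c) := by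
  have hc0 : c ≠ 0 := by rintro rfl; simp at hc
  have slit : ∀ (e : ℝ), e = 1 ∨ e = -1 → ∀ x ∈ Set.Icc (0:ℝ) 1,
      ((Real.sqrt (1 - x^2) : ℝ) : ℂ) + e * Complex.I * c * x ∈ Complex.slitPlane := by
    intro e he x hx
    rcases eq_or_ne x 0 with rfl | h0
    · simp
    right
    have : (((Real.sqrt (1 - x^2) : ℝ) : ℂ) + e * Complex.I * c * x).im = e * c.re * x := by
      simp
    rw [this]
    have : e ≠ 0 := by rcases he with rfl | rfl <;> norm_num
    have := hc.ne'
    positivity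
  have key := intervalIntegral.integral_eq_sub_of_hasDerivAt_of_le (a := 0) (b := 1)
    (f := fun x : ℝ => (1 / (2 * Complex.I * c)) *
      (Complex.log (((Real.sqrt (1 - x^2) : ℝ) : ℂ) + (1:ℝ) * Complex.I * c * x)
      - Complex.log (((Real.sqrt (1 - x^2) : ℝ) : ℂ) + (-1:ℝ) * Complex.I * c * x)))
    (f' := fun x : ℝ => ((1 / Real.sqrt (1 - x^2) : ℝ) : ℂ) * (1 / (1 - a * (x:ℂ)^2)))
    (by norm_num) ?_ ?_ ?_
  · rw [key]
    have l1 : Complex.log (Complex.I * c) = Complex.log c + π / 2 * Complex.I := by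
      rw [Complex.log_mul Complex.I_ne_zero hc0, Complex.log_I]; ring
      have := Complex.abs_arg_lt_pi_div_two_iff.mpr (Or.inl hc)
      rw [abs_lt] at this
      rw [Complex.arg_I]
      constructor <;> linarith [Real.pi_pos]
    have l2 : Complex.log (-Complex.I * c) = Complex.log c - π / 2 * Complex.I := by
      rw [Complex.log_mul (by simp) hc0, Complex.log_neg_I]; ring
      have := Complex.abs_arg_lt_pi_div_two_iff.mpr (Or.inl hc)
      rw [abs_lt] at this
      rw [Complex.arg_neg_I]
      constructor <;> linarith [Real.pi_pos]
    simp only [one_pow, sub_self, Real.sqrt_zero, Complex.ofReal_zero, zero_add, Complex.ofReal_one,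
      one_mul, mul_one, Complex.ofReal_neg, neg_mul]
    rw [neg_mul] at l2
    rw [l1, l2]
    have := Complex.I_ne_zero
    simp
    field_simp
    linear_combination (-2 : ℂ) * Complex.I_sq
  · refine ContinuousOn.mul continuousOn_const (ContinuousOn.sub ?_ ?_)
    · exact ContinuousOn.clog (by fun_prop) (slit 1 (Or.inl rfl))
    · exact ContinuousOn.clog (by fun_prop) (slit (-1) (Or.inr rfl))
  · intro x hx
    have hp : 0 < 1 - x^2 := by nlinarith [hx.1, hx.2]
    have hs : 0 < Real.sqrt (1 - x^2) := Real.sqrt_pos.mpr hp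
    have hsq : Real.sqrt (1 - x^2) ^ 2 = 1 - x^2 := Real.sq_sqrt hp.le
    have d1 : HasDerivAt (fun y : ℝ => 1 - y^2) (-(2*x)) x := by
      simpa using (hasDerivAt_pow 2 x).const_sub 1
    have d2 := (d1.sqrt hp.ne').ofReal_comp
    have d3 : ∀ e : ℝ, HasDerivAt (fun y : ℝ => (e:ℂ) * Complex.I * c * y) (e * Complex.I * c) x := by
      intro e
      simpa using (Complex.ofRealCLM.hasDerivAt (x := x)).const_mul ((e:ℂ) * Complex.I * c)
    have s1 := slit 1 (Or.inl rfl) x ⟨hx.1.le, hx.2.le⟩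
    have s2 := slit (-1) (Or.inr rfl) x ⟨hx.1.le, hx.2.le⟩
    have d4 := (((d2.add (d3 1)).clog_real s1).sub ((d2.add (d3 (-1))).clog_real s2)).const_mul
      (1 / (2 * Complex.I * c))
    refine d4.congr_deriv ?_
    have n1 := Complex.slitPlane_ne_zero s1
    have n2 := Complex.slitPlane_ne_zero s2
    have n3 := ha x
    have hsqC : ((Real.sqrt (1 - x^2) : ℝ) : ℂ)^2 = 1 - (x:ℂ)^2 := by exact_mod_cast hsq
    have hsC : ((Real.sqrt (1 - x^2) : ℝ) : ℂ) ≠ 0 := by exact_mod_cast hs.ne'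
    simp only [Pi.add_apply]
    push_cast at *
    generalize ((Real.sqrt (1 - x^2) : ℝ) : ℂ) = r at *
    have hI := Complex.I_ne_zero
    have hI2 := Complex.I_sq
    have e1 : 1 - a * (x:ℂ)^2 = (r + 1 * Complex.I * c * x) * (r + -1 * Complex.I * c * x) := by
      linear_combination (-(x:ℂ)^2) * hca - hsqC + c^2 * x^2 * hI2
    rw [e1]
    have h : r^2 + (x:ℂ)^2 = 1 := by rw [hsqC]; ring
    simp only [one_mul, neg_mul] at n1 n2 ⊢
    rw [← sub_eq_add_neg] at n2
    simp only [← sub_eq_add_neg]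
    field_simp
    linear_combination (2 * Complex.I * c) * h
  · have := sqrtR_int
    have h2 : IntervalIntegrable (fun x : ℝ => ((1 / Real.sqrt (1 - x^2) : ℝ) : ℂ)) volume 0 1 := by
      rw [intervalIntegrable_iff] at this ⊢
      exact this.ofReal
    refine h2.mul_continuousOn ?_
    refine Continuous.continuousOn ?_
    exact continuous_const.div (by fun_prop) ha

lemma half_re_pos (u : ℂ) (hu : u ∈ Complex.slitPlane) : 0 < (u ^ (2⁻¹ : ℂ)).re := by
  rw [Complex.cpow_def_of_ne_zero (Complex.slitPlane_ne_zero hu), Complex.exp_re]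
  refine mul_pos (Real.exp_pos _) (Real.cos_pos_of_mem_Ioo ?_)
  have h1 : (Complex.log u * 2⁻¹).im = u.arg / 2 := by
    rw [show (2⁻¹ : ℂ) = ((2⁻¹ : ℝ) : ℂ) by push_cast; rfl, Complex.im_mul_ofReal, Complex.log_im]
    ring
  rw [h1]
  have h2 := Complex.neg_pi_lt_arg u
  have h3 := lt_of_le_of_ne (Complex.arg_le_pi u) (Complex.mem_slitPlane_iff_arg.mp hu).1
  constructor <;> linarith

lemma half_sq (u : ℂ) : (u ^ (2⁻¹ : ℂ)) ^ 2 = u := Complex.cpow_ofNat_inv_pow u 2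

lemma half_int (w : ℂ) (hr : w.re ≠ 0) (hi : w.im ≠ 0) :
    ∫ x in (0:ℝ)..1, (psiDens x : ℂ) * (2 * w / (1 - w^2 * (x:ℂ)^2)) =
      ∫ s in (0:ℝ)..1, w / (1 - w^2 * (s:ℂ)^2) ^ (2⁻¹ : ℂ) := by
  have hne : ∀ t : ℝ, 1 - w^2 * (t:ℂ)^2 ≠ 0 :=
    fun t => Complex.slitPlane_ne_zero (sq_slit w hr hi t)
  set K : ℝ → ℂ := fun t => 2 * w / (1 - w^2 * (t:ℂ)^2) with hK
  have Kc : Continuous K := continuous_const.div (by fun_prop) hne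
  set M : ℝ → ℂ := fun x => ∫ s in (0:ℝ)..1, K (x * s) with hM
  have Mc : Continuous M := by
    refine intervalIntegral.continuous_parametric_intervalIntegral_of_continuous'
      (f := fun x s => K (x * s)) ?_ 0 1
    exact Kc.comp (by fun_prop)
  set L : ℝ → ℂ := fun x => ∫ s in (0:ℝ)..x, K s with hL
  have LM : ∀ x, L x = x * M x := by
    intro x
    have := intervalIntegral.smul_integral_comp_mul_left (a := 0) (b := 1) K x
    simp only [mul_zero, mul_one] at this
    simp only [hL, hM]
    rw [← this, Complex.real_smul]
  have Ld : ∀ x, HasDerivAt L (K x) x := fun x =>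
    intervalIntegral.integral_hasDerivAt_right (Kc.intervalIntegrable _ _)
      Kc.stronglyMeasurable.stronglyMeasurableAtFilter Kc.continuousAt
  have hR : IntervalIntegrable (fun x : ℝ => ((1 / Real.sqrt (1 - x^2) : ℝ) : ℂ)) volume 0 1 := by
    have := sqrtR_int
    rw [intervalIntegrable_iff] at this ⊢
    exact this.ofReal
  have i1 : IntervalIntegrable (fun x : ℝ => (psiDens x : ℂ) * K x) volume 0 1 := by
    refine IntervalIntegrable.mul_continuousOn ?_ Kc.continuousOn
    refine psi_int'.mono_set ?_
    rw [Set.uIcc_of_le (by norm_num), Set.uIcc_of_le (by norm_num)]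
    exact Set.Icc_subset_Icc (by norm_num) le_rfl
  have i2 : IntervalIntegrable (fun x : ℝ => (1 / π : ℂ) * (((1 / Real.sqrt (1 - x^2) : ℝ) : ℂ) * M x))
      volume 0 1 := (hR.mul_continuousOn Mc.continuousOn).const_mul _
  have ftc := intervalIntegral.integral_eq_sub_of_hasDerivAt_of_le (a := 0) (b := 1)
    (f := fun x : ℝ => (psiDens x : ℂ) * L x)
    (f' := fun x : ℝ => (psiDens x : ℂ) * K x -
      (1 / π : ℂ) * (((1 / Real.sqrt (1 - x^2) : ℝ) : ℂ) * M x)) (by norm_num) ?_ ?_ (i1.sub i2)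
  · have p1 : psiDens 1 = 0 := by simp [psiDens]
    have l0 : L 0 = 0 := by simp [hL]
    rw [p1, l0, intervalIntegral.integral_sub i1 i2] at ftc
    simp only [Complex.ofReal_zero, zero_mul, mul_zero, sub_zero] at ftc
    rw [sub_eq_zero.mp ftc, intervalIntegral.integral_const_mul]
    have e1 : ∀ x : ℝ, ((1 / Real.sqrt (1 - x^2) : ℝ) : ℂ) * M x =
        ∫ s in (0:ℝ)..1, ((1 / Real.sqrt (1 - x^2) : ℝ) : ℂ) * K (x * s) := by
      intro x
      rw [intervalIntegral.integral_const_mul]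
    simp_rw [e1]
    have swap : ∫ x in (0:ℝ)..1, ∫ s in (0:ℝ)..1, ((1 / Real.sqrt (1 - x^2) : ℝ) : ℂ) * K (x * s)
        = ∫ s in (0:ℝ)..1, ∫ x in (0:ℝ)..1, ((1 / Real.sqrt (1 - x^2) : ℝ) : ℂ) * K (x * s) := by
      simp only [intervalIntegral.integral_of_le (zero_le_one' ℝ)]
      apply MeasureTheory.integral_integral_swap
      obtain ⟨C, hC⟩ := (isCompact_Icc (a := (0:ℝ)) (b := 1)).exists_bound_of_continuousOn Kc.continuousOn
      have hR' := (intervalIntegrable_iff_integrableOn_Ioc_of_le (zero_le_one' ℝ)).mp hR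
      have h1 : IntegrableOn (fun _ : ℝ => (1:ℂ)) (Set.Ioc 0 1) volume := by simp
      have hp := hR'.integrable.mul_prod h1.integrable
      have hb := hp.bdd_mul (f := fun p : ℝ × ℝ => K (p.1 * p.2)) (c := C)
        (Kc.comp (by fun_prop : Continuous fun p : ℝ × ℝ => p.1 * p.2)).aestronglyMeasurable ?_
      · refine hb.congr (ae_of_all _ ?_)
        intro p
        simp only [Function.uncurry]
        ring
      · rw [Measure.prod_restrict]
        filter_upwards [ae_restrict_mem (measurableSet_Ioc.prod measurableSet_Ioc)] with p hp
        apply hC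
        obtain ⟨⟨a1, a2⟩, b1, b2⟩ := hp
        exact ⟨by positivity, by nlinarith⟩
    rw [swap, ← intervalIntegral.integral_const_mul]
    refine intervalIntegral.integral_congr ?_
    intro s _
    have hs := sq_slit w hr hi s
    have inn := inner_int _ (half_re_pos _ hs) (w^2 * (s:ℂ)^2) (half_sq _) (by
      intro x
      have := hne (s * x)
      push_cast at this
      rwa [mul_pow, ← mul_assoc] at this)
    have e2 : ∀ x : ℝ, ((1 / Real.sqrt (1 - x^2) : ℝ) : ℂ) * K (x * s) =
       2 * w * (((1 / Real.sqrt (1 - x^2) : ℝ) : ℂ) * (1 / (1 - (w^2 * (s:ℂ)^2) * (x:ℂ)^2))) := by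
      intro x
      simp only [hK]
      push_cast
      rw [show w^2 * ((x:ℂ) * s)^2 = w^2 * (s:ℂ)^2 * (x:ℂ)^2 by ring]
      ring
    simp only [e2]
    rw [intervalIntegral.integral_const_mul, inn]
    have hc0 : (1 - w^2 * (s:ℂ)^2) ^ (2⁻¹ : ℂ) ≠ 0 := by
      intro h
      have := half_re_pos _ hs
      rw [h] at this
      simp at this
    have hpi : (π : ℂ) ≠ 0 := by exact_mod_cast Real.pi_ne_zero
    field_simp
  · have : ContinuousOn (fun x : ℝ => ((x * psiDens x : ℝ) : ℂ) * M x) (Set.Icc 0 1) :=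
      (Complex.continuous_ofReal.comp_continuousOn x_psi_cont).mul Mc.continuousOn
    refine this.congr ?_
    intro x _
    simp only [LM]
    push_cast
    ring
  · intro x hx
    refine ((psi_deriv x hx).ofReal_comp.mul (Ld x)).congr_deriv ?_
    rw [LM]
    have hx0 : (x:ℂ) ≠ 0 := by exact_mod_cast hx.1.ne'
    have hpi : (π : ℂ) ≠ 0 := by exact_mod_cast Real.pi_ne_zero
    have hs : ((Real.sqrt (1 - x^2) : ℝ) : ℂ) ≠ 0 := by
      have : 0 < 1 - x^2 := by nlinarith [hx.1, hx.2]
      exact_mod_cast (Real.sqrt_pos.mpr this).ne'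
    push_cast
    field_simp
    ring

lemma arcsin_int (w e : ℂ) (hr : w.re ≠ 0) (hi : w.im ≠ 0) (he : e^2 = -1)
    (hew : 0 < (e * w).re) :
    ∫ s in (0:ℝ)..1, w / (1 - w^2 * (s:ℂ)^2) ^ (2⁻¹ : ℂ) =
      - e * Complex.log ((1 - w^2) ^ (2⁻¹ : ℂ) + e * w) := by
  set c : ℝ → ℂ := fun s => (1 - w^2 * (s:ℂ)^2) ^ (2⁻¹ : ℂ) with hcdef
  have hcre : ∀ s, 0 < (c s).re := fun s => half_re_pos _ (sq_slit w hr hi s)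
  have hc0 : ∀ s, c s ≠ 0 := by
    intro s h
    have := hcre s
    rw [h] at this
    simp at this
  have hcd : ∀ s, HasDerivAt c (- (w^2 * s) / c s) s := by
    intro s
    have hs := sq_slit w hr hi s
    have d0 : HasDerivAt (fun t : ℝ => (t:ℂ)) 1 s := Complex.ofRealCLM.hasDerivAt
    have d1 := ((d0.pow 2).const_mul (w^2)).const_sub 1
    have e1 : c = fun s : ℝ => Complex.exp (Complex.log (1 - w^2 * (s:ℂ)^2) * 2⁻¹) := by
      funext t
      simp only [hcdef]
      rw [Complex.cpow_def_of_ne_zero (Complex.slitPlane_ne_zero (sq_slit w hr hi t))]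
    have d2 := ((d1.clog_real hs).mul_const (2⁻¹ : ℂ)).cexp
    have e3 : Complex.exp (Complex.log (1 - w^2 * (s:ℂ)^2) * 2⁻¹) = c s := (congrFun e1 s).symm
    have e4 : (1 - w^2 * (s:ℂ)^2) = c s ^ 2 := (half_sq _).symm
    have := hc0 s
    rw [e1]
    refine d2.congr_deriv ?_
    simp only [Pi.pow_apply]
    rw [e3]
    rw [e4]
    field_simp
    try ring
  have cc : Continuous c := continuous_iff_continuousAt.mpr fun s => (hcd s).continuousAt
  have slit : ∀ s ∈ Set.Icc (0:ℝ) 1, c s + e * w * s ∈ Complex.slitPlane := by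
    intro s hs
    left
    have : (c s + e * w * s).re = (c s).re + (e*w).re * s := by simp
    rw [this]
    have := hcre s
    have := mul_nonneg hew.le hs.1
    linarith
  have ftc := intervalIntegral.integral_eq_sub_of_hasDerivAt_of_le (a := 0) (b := 1)
    (f := fun s : ℝ => - e * Complex.log (c s + e * w * s))
    (f' := fun s : ℝ => w / c s) (by norm_num) ?_ ?_ ?_
  · rw [ftc]; simp [hcdef]
  · exact continuousOn_const.mul (ContinuousOn.clog (by fun_prop) slit)
  · intro s hs
    have d0 : HasDerivAt (fun t : ℝ => (t:ℂ)) 1 s := Complex.ofRealCLM.hasDerivAt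
    have sl := slit s ⟨hs.1.le, hs.2.le⟩
    have d1 := (((hcd s).add (d0.const_mul (e * w))).clog_real sl).const_mul (-e)
    refine d1.congr_deriv ?_
    have n1 := Complex.slitPlane_ne_zero sl
    have n2 := hc0 s
    simp only [Pi.add_apply]
    field_simp
    linear_combination (-w * c s) * he
  · exact (continuous_const.div cc hc0).intervalIntegrable _ _

lemma sub_ne (z : ℂ) (him : z.im ≠ 0) (x : ℝ) : z - x ≠ 0 := by
  intro h
  have := congrArg Complex.im h
  simp at this
  exact him this

lemma sym_int (z : ℂ) (him : z.im ≠ 0) :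
    (∫ x in (-1 : ℝ)..1, ((psiDens x : ℝ) : ℂ) / (z - x)) =
    ∫ x in (0:ℝ)..1, (psiDens x : ℂ) * (2 * z⁻¹ / (1 - z⁻¹^2 * (x:ℂ)^2)) := by
  have hz : z ≠ 0 := by rintro rfl; simp at him
  have hne := sub_ne z him
  have hi : IntervalIntegrable (fun x : ℝ => ((psiDens x : ℝ) : ℂ) / (z - x)) volume (-1) 1 := by
    simp only [div_eq_mul_inv]
    refine psi_int'.mul_continuousOn ?_
    exact (Continuous.inv₀ (by fun_prop) hne).continuousOn
  have h1 : IntervalIntegrable (fun x : ℝ => ((psiDens x : ℝ) : ℂ) / (z - x)) volume (-1) 0 := by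
    refine hi.mono_set ?_
    rw [Set.uIcc_of_le (by norm_num), Set.uIcc_of_le (by norm_num)]
    exact Set.Icc_subset_Icc le_rfl (by norm_num)
  have h2 : IntervalIntegrable (fun x : ℝ => ((psiDens x : ℝ) : ℂ) / (z - x)) volume 0 1 := by
    refine hi.mono_set ?_
    rw [Set.uIcc_of_le (by norm_num), Set.uIcc_of_le (by norm_num)]
    exact Set.Icc_subset_Icc (by norm_num) le_rfl
  have h3 : IntervalIntegrable (fun x : ℝ => ((psiDens (-x) : ℝ) : ℂ) / (z - (-x : ℝ))) volume 0 1 := by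
    simp only [psi_even, div_eq_mul_inv]
    refine IntervalIntegrable.mul_continuousOn (psi_int'.mono_set ?_) ?_
    · rw [Set.uIcc_of_le (by norm_num), Set.uIcc_of_le (by norm_num)]
      exact Set.Icc_subset_Icc (by norm_num) le_rfl
    · exact (Continuous.inv₀ (by fun_prop) fun x => hne (-x)).continuousOn
  rw [← intervalIntegral.integral_add_adjacent_intervals h1 h2]
  have h4 := intervalIntegral.integral_comp_neg (a := 0) (b := 1)
    (fun x : ℝ => ((psiDens x : ℝ) : ℂ) / (z - x))
  rw [neg_zero] at h4
  rw [← h4, ← intervalIntegral.integral_add h3 h2]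
  refine intervalIntegral.integral_congr ?_
  intro x _
  simp only [psi_even]
  have n1 := hne x
  have n2 := hne (-x)
  have n3 : 1 - z⁻¹^2 * (x:ℂ)^2 = (z - x) * (z + x) / z^2 := by
    field_simp
    ring
  rw [n3]
  push_cast at *
  rw [sub_neg_eq_add] at n2 ⊢
  field_simp
  ring

lemma alg_log (z e : ℂ) (hr : 0 < z.re) (hi : z.im ≠ 0) (he : e = Complex.I ∨ e = -Complex.I)
    (hew : 0 < (e * z⁻¹).re) :
    - e * Complex.log ((1 - z⁻¹^2) ^ (2⁻¹ : ℂ) + e * z⁻¹) =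
     (π / 2 : ℂ) - e * Complex.log ((1 + (1 - z ^ 2) ^ ((1 : ℂ) / 2)) / z) := by
  have hz : z ≠ 0 := by rintro rfl; simp at hi
  have he2 : e^2 = -1 := by rcases he with rfl | rfl <;> simp
  have hsl : 1 - z⁻¹^2 ∈ Complex.slitPlane := by
    have := sq_slit z⁻¹ (by simp [hr.ne', hz]) (by simp [hi, hz]) 1
    simpa using this
  have hcre := half_re_pos _ hsl
  have hcsq := half_sq (1 - z⁻¹^2)
  set c := (1 - z⁻¹^2) ^ (2⁻¹ : ℂ) with hc
  have hcz : (c^2).im * Complex.normSq z ^ 2 = 2 * z.re * z.im := by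
    rw [hcsq]
    have hn : Complex.normSq z ≠ 0 := by simpa using hz
    simp only [pow_two, Complex.sub_im, Complex.mul_im, Complex.one_im, Complex.inv_re, Complex.inv_im]
    field_simp
    ring
  have hn : 0 < Complex.normSq z := by simpa [Complex.normSq_pos] using hz
  have hcim : 0 < c.im * z.im := by
    have h1 : (c^2).im = 2 * c.re * c.im := by simp [pow_two, Complex.mul_im]; ring
    rw [h1] at hcz
    have h2 : 2 * c.re * Complex.normSq z ^ 2 * (c.im * z.im) = 2 * z.re * z.im^2 := by
      linear_combination z.im * hcz
    have h3 : 0 < 2 * z.re * z.im^2 := by positivity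
    rw [← h2] at h3
    exact pos_of_mul_pos_right h3 (by positivity)
  have hpos : 0 < (-e * z * c).re := by
    rcases he with rfl | rfl
    · have hzi : 0 < z.im := by
        simp [Complex.inv_im] at hew
        by_contra h
        have : z.im < 0 := lt_of_le_of_ne (not_lt.mp h) hi
        have := div_neg_of_neg_of_pos this hn
        simp [neg_div] at hew
        linarith
      have hci : 0 < c.im := by nlinarith
      simp
      nlinarith [mul_pos hr hci, mul_pos hzi hcre]
    · have hzi : z.im < 0 := by
        simp [Complex.inv_im] at hew
        by_contra h
        have := div_nonneg (not_lt.mp h) hn.le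
        simp [neg_div] at hew
        linarith
      have hci : c.im < 0 := by nlinarith
      simp
      nlinarith [mul_pos hr (neg_pos.mpr hci), mul_pos (neg_pos.mpr hzi) hcre]
  have hsq : (-e * z * c)^2 = 1 - z^2 := by
    have : (-e * z * c)^2 = e^2 * z^2 * c^2 := by ring
    rw [this, he2, hcsq]
    field_simp
    ring
  have hroot : (1 - z^2) ^ ((1:ℂ)/2) = -e * z * c := by
    rw [← hsq, one_div]
    exact Complex.sq_cpow_two_inv hpos
  rw [hroot]
  have e1 : (1 + -e * z * c) / z = -e * (c + e * z⁻¹) := by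
    field_simp
    linear_combination he2
  rw [e1]
  set u := c + e * z⁻¹ with hu
  have hure : 0 < u.re := by simp only [hu, Complex.add_re]; linarith
  have hu0 : u ≠ 0 := by intro h; rw [h] at hure; simp at hure
  have harg := Complex.abs_arg_lt_pi_div_two_iff.mpr (Or.inl hure)
  rw [abs_lt] at harg
  have hlog : Complex.log (-e * u) = -e * (π/2) + Complex.log u := by
    rcases he with h | h
    · rw [h, Complex.log_mul (by simp) hu0, Complex.log_neg_I]
      · ring
      · rw [Complex.arg_neg_I]
        constructor <;> linarith [Real.pi_pos]
    · rw [h, neg_neg, Complex.log_mul (by simp) hu0, Complex.log_I]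
      · ring
      · rw [Complex.arg_I]
        constructor <;> linarith [Real.pi_pos]
  rw [hlog]
  linear_combination (-(π:ℂ)/2) * he2

lemma cauchy_part (z : ℂ) (hre : 0 < z.re) (him : z.im ≠ 0) :
    (∫ x in (-1 : ℝ)..1, ((psiDens x : ℝ) : ℂ) / (z - x)) =
        (π / 2 : ℂ) - (Real.sign z.im : ℂ) * Complex.I *
          Complex.log ((1 + (1 - z ^ 2) ^ ((1 : ℂ) / 2)) / z) := by
  have hz : z ≠ 0 := by rintro rfl; simp at him
  have hn : 0 < Complex.normSq z := by simpa [Complex.normSq_pos] using hz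
  have h1 : (z⁻¹).re ≠ 0 := by simp [hre.ne', hz]
  have h2 : (z⁻¹).im ≠ 0 := by simp [him, hz]
  rw [sym_int z him, half_int _ h1 h2]
  rcases lt_or_gt_of_ne him with h | h
  · have hew : 0 < (-Complex.I * z⁻¹).re := by
      have := div_neg_of_neg_of_pos h hn
      simp [Complex.inv_im, neg_div]
      linarith
    rw [arcsin_int _ (-Complex.I) h1 h2 (by simp) hew, alg_log z _ hre him (Or.inr rfl) hew,
      Real.sign_of_neg h]
    simp
  · have hew : 0 < (Complex.I * z⁻¹).re := by
      have := div_pos h hn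
      simp [Complex.inv_im, neg_div]
      linarith
    rw [arcsin_int _ (Complex.I) h1 h2 (by simp) hew, alg_log z _ hre him (Or.inl rfl) hew,
      Real.sign_of_pos h]
    simp

lemma g_deriv (z : ℂ) (him : z.im ≠ 0) :
    HasDerivAt gFun (∫ x in (-1 : ℝ)..1, ((psiDens x : ℝ) : ℂ) / (z - x)) z := by
  have hd : 0 < |z.im| / 2 := by have := abs_pos.mpr him; positivity
  have hball : ∀ y ∈ Metric.ball z (|z.im| / 2), |z.im| / 2 ≤ |y.im| := by
    intro y hy
    rw [Metric.mem_ball, dist_eq_norm] at hy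
    have h1 := Complex.abs_im_le_norm (y - z)
    rw [Complex.sub_im] at h1
    have h2 := abs_sub_abs_le_abs_sub z.im y.im
    rw [abs_sub_comm] at h2
    linarith
  have hball0 : ∀ y ∈ Metric.ball z (|z.im| / 2), y.im ≠ 0 := by
    intro y hy
    exact abs_pos.mp (hd.trans_le (hball y hy))
  have hslit : ∀ y : ℂ, y.im ≠ 0 → ∀ x : ℝ, y - x ∈ Complex.slitPlane := by
    intro y hy x
    right
    simpa using hy
  have hcont : ∀ y : ℂ, y.im ≠ 0 → Continuous (fun x : ℝ => Complex.log (y - x)) := fun y hy =>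
    Continuous.clog (by fun_prop) (hslit y hy)
  have := (intervalIntegral.hasDerivAt_integral_of_dominated_loc_of_deriv_le
    (μ := volume) (a := -1) (b := 1) (x₀ := z) (s := Metric.ball z (|z.im| / 2))
    (F := fun (y : ℂ) (x : ℝ) => Complex.log (y - x) * (psiDens x : ℂ))
    (F' := fun (y : ℂ) (x : ℝ) => ((psiDens x : ℝ) : ℂ) / (y - x))
    (bound := fun x => |psiDens x| / (|z.im| / 2))
    (Metric.ball_mem_nhds z hd) ?_ ?_ ?_ ?_ ?_ ?_).2
  · exact this
  · filter_upwards [Metric.ball_mem_nhds z hd] with y hy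
    exact ((hcont y (hball0 y hy)).measurable.mul
      (Complex.measurable_ofReal.comp psi_meas)).aestronglyMeasurable
  · exact psi_int'.continuousOn_mul (hcont z him).continuousOn
  · refine Measurable.aestronglyMeasurable ?_
    exact (Complex.measurable_ofReal.comp psi_meas).div (by fun_prop)
  · refine ae_of_all _ fun x _ y hy => ?_
    rw [norm_div, Complex.norm_real, Real.norm_eq_abs]
    refine div_le_div_of_nonneg_left (abs_nonneg _) hd ((hball y hy).trans ?_)
    simpa using Complex.abs_im_le_norm (y - x)
  · exact psi_int.abs.div_const _
  · refine ae_of_all _ fun x _ y hy => ?_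
    refine ((((hasDerivAt_id y).sub_const (x:ℂ)).clog (hslit y (hball0 y hy) x)).mul_const
      (psiDens x : ℂ)).congr_deriv ?_
    simp only [id]
    ring

/-- **Lemma (Cauchy transform of `ψ` and derivative of `g`).**
For `Re z > 0`, `Im z ≠ 0`:
`∫_{-1}^1 ψ(x)/(z-x) dx = π/2 - sgn(Im z) i Log((1+(1-z²)^{1/2})/z)`; equivalently,
`g'(z) = π/2 - iπψ(z)` for `Im z > 0` and `g'(z) = π/2 + iπψ(z)` for `Im z < 0`. -/
theorem cauchy_transform_psi (z : ℂ) (hre : 0 < z.re) (him : z.im ≠ 0) :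
    (∫ x in (-1 : ℝ)..1, ((psiDens x : ℝ) : ℂ) / (z - x)) =
        (π / 2 : ℂ) - (Real.sign z.im : ℂ) * Complex.I *
          Complex.log ((1 + (1 - z ^ 2) ^ ((1 : ℂ) / 2)) / z) ∧
      (0 < z.im → HasDerivAt gFun ((π / 2 : ℂ) - Complex.I * π * psiC z) z) ∧
      (z.im < 0 → HasDerivAt gFun ((π / 2 : ℂ) + Complex.I * π * psiC z) z) := by
  refine ⟨cauchy_part z hre him, fun h => ?_, fun h => ?_⟩
  all_goals
    have hd := g_deriv z him
    rw [cauchy_part z hre him] at hd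
    refine hd.congr_deriv ?_
    have hpi : (π : ℂ) ≠ 0 := by exact_mod_cast Real.pi_ne_zero
    unfold psiC
    first
      | rw [Real.sign_of_pos h]
      | rw [Real.sign_of_neg h]
    push_cast
    field_simp
    try ring
end
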